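/- arXiv:math/9305205 — 6 statements merged into one kernel-verified Lean document; each statement's English description precedes it below -/
import Mathlib

section
/- Any homomorphism from a subgroup H of an abelian group K to ℤ/pℤ can be extended to a homomorphism from K to ℤ/pℤ, provided that H is p-pure in K. Precisely: let K be an abelian group, p a prime, and H a subgroup of K such that for every a ∈ H, if a ∈ pK then a ∈ pH. Then for every group homomorphism h : H → ℤ/pℤ there exists a group homomorphism g : K → ℤ/pℤ whose restriction to H equals h. -/
/-!
A subgroup `H ≤ K` is `n`-pure exactly when `H / nH → K / nK` is injective. A homomorphism from `H`
to a `ℤ/nℤ`-module factors through `H / nH`, and it extends along this injection as soon as the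
target is an injective `ℤ/nℤ`-module. For `n ≠ 0` the ring `ℤ/nℤ` is injective over itself: by
Baer's criterion this amounts to the fact that `a` divides every element annihilated by the
annihilator of `a`.
-/

open Function

section Baer

theorem baer_of_forall_exists_smul_eq {R M : Type*} [Ring R] [IsPrincipalIdealRing R]
    [AddCommGroup M] [Module R M]
    (hM : ∀ (a : R) (m : M), (∀ c : R, c * a = 0 → c • m = 0) → ∃ x : M, a • x = m) :
    Module.Baer R M := by
  intro I g
  obtain ⟨a, rfl⟩ := IsPrincipalIdealRing.principal I
  let a' : Submodule.span R {a} := ⟨a, Submodule.mem_span_singleton_self a⟩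
  have annihilates (c : R) (hc : c * a = 0) : c • g a' = 0 := by
    rw [← map_smul, show c • a' = 0 from Subtype.ext hc, map_zero]
  obtain ⟨x, hx⟩ := hM a (g a') annihilates
  refine ⟨LinearMap.toSpanSingleton R M x, fun r hr ↦ ?_⟩
  obtain ⟨c, rfl⟩ := Submodule.mem_span_singleton.1 hr
  calc (c • a) • x = c • g a' := by rw [smul_assoc, hx]
    _ = g ⟨c • a, hr⟩ := (map_smul g c a').symm

variable {n : ℕ} [NeZero n]

theorem zmod_dvd_of_forall_mul_eq_zero {a b : ZMod n} (h : ∀ c, c * a = 0 → c * b = 0) :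
    a ∣ b := by
  set d := a.val.gcd n
  obtain ⟨e, he⟩ : d ∣ n := Nat.gcd_dvd_right a.val n
  have e_pos : 0 < e := Nat.pos_of_ne_zero fun h0 ↦ NeZero.ne n (by rw [he, h0, mul_zero])
  have natCast_mul_eq_zero_iff (c : ZMod n) : (e : ZMod n) * c = 0 ↔ d ∣ c.val := by
    rw [← Nat.mul_dvd_mul_iff_left e_pos, mul_comm e d, ← he, ← ZMod.natCast_eq_zero_iff,
      Nat.cast_mul, ZMod.natCast_zmod_val]
  have d_dvd_b : d ∣ b.val :=
    (natCast_mul_eq_zero_iff b).1 (h e ((natCast_mul_eq_zero_iff a).2 (Nat.gcd_dvd_left a.val n)))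
  calc a ∣ a * a⁻¹ := dvd_mul_right a a⁻¹
    _ = (d : ZMod n) := ZMod.mul_inv_eq_gcd a
    _ ∣ (b.val : ZMod n) := Nat.cast_dvd_cast d_dvd_b
    _ = b := ZMod.natCast_zmod_val b

theorem baer_zmod_self : Module.Baer (ZMod n) (ZMod n) :=
  have : IsPrincipalIdealRing (ZMod n) :=
    .of_surjective (Int.castRingHom (ZMod n)) ZMod.intCast_surjective
  baer_of_forall_exists_smul_eq fun _ _ h ↦
    (zmod_dvd_of_forall_mul_eq_zero h).imp fun _ ↦ Eq.symm

end Baer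

section Purity

variable {G K A : Type*} [AddCommGroup G] [AddCommGroup K] [AddCommGroup A] {n : ℕ}

theorem modN_mkQ_eq_zero_iff {x : G} : ModN.mkQ n x = 0 ↔ ∃ y : G, n • y = x := by
  simp [ModN.mkQ]

/-- The `ℤ/nℤ`-linear map `G / nG → K / nK` induced by `f : G →+ K`. -/
def modNMap (n : ℕ) (f : G →+ K) : ModN G n →ₗ[ZMod n] ModN K n :=
  ModN.liftEquiv'.symm ⟨(ModN.mkQ n).comp f, fun _ ↦ ZModModule.char_nsmul_eq_zero n _⟩

theorem modNMap_mkQ (f : G →+ K) (x : G) :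
    modNMap n f (ModN.mkQ n x) = ModN.mkQ n (f x) :=
  rfl

theorem injective_modNMap_iff {f : G →+ K} :
    Injective (modNMap n f) ↔ ∀ x : G, (∃ y : K, n • y = f x) → ∃ z : G, n • z = x := by
  have mkQ_surjective : Surjective (ModN.mkQ n : G →+ ModN G n) := Submodule.mkQ_surjective _
  simp_rw [injective_iff_map_eq_zero, mkQ_surjective.forall, modNMap_mkQ, modN_mkQ_eq_zero_iff]

theorem exists_comp_eq_of_injective_modNMap [Module (ZMod n) A] (hA : Module.Baer (ZMod n) A)
    {f : G →+ K} (hf : Injective (modNMap n f)) (h : G →+ A) : ∃ g : K →+ A, g.comp f = h := by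
  let hbar : ModN G n →ₗ[ZMod n] A :=
    ModN.liftEquiv'.symm ⟨h, fun _ ↦ ZModModule.char_nsmul_eq_zero n _⟩
  obtain ⟨gbar, hgbar⟩ := hA.extension_property (modNMap n f) hf hbar
  refine ⟨gbar.toAddMonoidHom.comp (ModN.mkQ n), AddMonoidHom.ext fun x ↦ ?_⟩
  calc gbar (ModN.mkQ n (f x)) = gbar (modNMap n f (ModN.mkQ n x)) := by rw [modNMap_mkQ]
    _ = hbar (ModN.mkQ n x) := LinearMap.congr_fun hgbar (ModN.mkQ n x)
    _ = h x := rfl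

/-- A subgroup `H` of `K` is `n`-pure if `H ∩ nK ⊆ nH`. -/
def IsNSMulPure (n : ℕ) (H : AddSubgroup K) : Prop :=
  ∀ a ∈ H, (∃ x : K, n • x = a) → ∃ b ∈ H, n • b = a

theorem isNSMulPure_iff_injective_modNMap_subtype {H : AddSubgroup K} :
    IsNSMulPure n H ↔ Injective (modNMap n H.subtype) := by
  simp [IsNSMulPure, injective_modNMap_iff, Subtype.ext_iff]

theorem extend_hom_of_pPure_general [Module (ZMod n) A] (hA : Module.Baer (ZMod n) A)
    {H : AddSubgroup K} (hH : IsNSMulPure n H) (h : H →+ A) :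
    ∃ g : K →+ A, g.comp H.subtype = h :=
  exists_comp_eq_of_injective_modNMap hA (isNSMulPure_iff_injective_modNMap_subtype.1 hH) h

end Purity

/-- Any homomorphism from a `p`-pure subgroup `H` of an abelian group `K` to `ℤ/pℤ`
extends to a homomorphism from `K` to `ℤ/pℤ`. -/
theorem extend_hom_of_pPure (K : Type*) [AddCommGroup K] (p : ℕ) (hp : p.Prime)
    (H : AddSubgroup K)
    (hpure : ∀ a ∈ H, (∃ x : K, p • x = a) → ∃ b ∈ H, p • b = a) :
    ∀ h : H →+ ZMod p, ∃ g : K →+ ZMod p, g.comp H.subtype = h :=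
  have : NeZero p := ⟨hp.ne_zero⟩
  extend_hom_of_pPure_general baer_zmod_self hpure
end

section
/- Suppose λ is the minimal cardinality of a non-free coseparable abelian group; that is, there exists a coseparable abelian group of cardinality λ that is not free as a ℤ-module, and every coseparable abelian group of cardinality less than λ is free. Then every coseparable abelian group is λ-free: for every coseparable abelian group A, every subgroup of A of cardinality less than λ is free as a ℤ-module. -/
universe u

/-- An abelian group is coseparable if it is `ℵ₁`-free and for every prime `p`,
every homomorphism to `ℤ/pℤ` lifts to a homomorphism to `ℤ`. -/
def IsCoseparable (A : Type u) [AddCommGroup A] : Prop :=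
  (∀ S : AddSubgroup A, Cardinal.mk S < Cardinal.aleph 1 → Module.Free ℤ S) ∧
  (∀ p : ℕ, p.Prime → ∀ h : A →+ ZMod p,
    ∃ g : A →+ ℤ, (Int.castAddHom (ZMod p)).comp g = h)

/-- An abelian group is free (as a `ℤ`-module). -/
def IsFreeAb (A : Type u) [AddCommGroup A] : Prop := Module.Free ℤ A

/-!
Let `S` be an uncountable subgroup of a coseparable group `A` with `#S < λ`. As `A` is
torsion-free, the pure closure `P` of `S` in `A` has the same cardinality as `S`. Purity makes
`P / pP → A / pA` injective, and injective linear maps over `ZMod p` split, so every homomorphism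
`P → ℤ/pℤ` extends to `A`; there it lifts to `ℤ`, and the lifting restricts to `P`. Hence `P` is
coseparable, so free by minimality of `λ`, and its subgroup `S` is free.

Submodules of free modules of arbitrary rank over a principal ideal domain are free: after
well-ordering the coordinates, elements of the submodule whose leading coefficients generate the
nonzero leading coefficient ideals form a basis.
-/

open Cardinal

section SubmoduleOfFree

variable {R ι : Type*} [Ring R]

section LinearOrder

variable [LinearOrder ι]

/-- The ideal of leading coefficients at `i` of a submodule `N` of `ι →₀ R`: the values at `i` of
the elements of `N` supported on `Set.Iic i`. -/
noncomputable def leadingCoeffIdeal (N : Submodule R (ι →₀ R)) (i : ι) : Ideal R :=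
  (N ⊓ Finsupp.supported R R (Set.Iic i)).map (Finsupp.lapply i)

lemma mem_leadingCoeffIdeal {N : Submodule R (ι →₀ R)} {i : ι} {r : R} :
    r ∈ leadingCoeffIdeal N i ↔ ∃ f ∈ N, f ∈ Finsupp.supported R R (Set.Iic i) ∧ f i = r := by
  simp [leadingCoeffIdeal, and_assoc]

lemma exists_mem_support_mem_supported_Iic {f : ι →₀ R} (hf : f ≠ 0) :
    ∃ m ∈ f.support, f ∈ Finsupp.supported R R (Set.Iic m) :=
  have hs := Finsupp.support_nonempty_iff.2 hf
  ⟨f.support.max' hs, f.support.max'_mem hs, fun j hj ↦ f.support.le_max' j hj⟩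

lemma eq_of_le_of_leadingCoeffIdeal_le [WellFoundedLT ι] {S N : Submodule R (ι →₀ R)}
    (hSN : S ≤ N) (hcoeff : ∀ i, leadingCoeffIdeal N i ≤ leadingCoeffIdeal S i) : S = N := by
  have mem_of_supported (i : ι) :
      ∀ f ∈ N, f ∈ Finsupp.supported R R (Set.Iic i) → f ∈ S := by
    induction i using WellFoundedLT.induction with
    | _ i ih =>
      intro f hfN hfi
      obtain ⟨g, hgS, hgi, hgf⟩ :=
        mem_leadingCoeffIdeal.1 (hcoeff i (mem_leadingCoeffIdeal.2 ⟨f, hfN, hfi, rfl⟩))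
      suffices hsub : f - g ∈ S by simpa using S.add_mem hsub hgS
      rcases eq_or_ne (f - g) 0 with hzero | hne
      · exact hzero ▸ S.zero_mem
      obtain ⟨m, hm, hfgm⟩ := exists_mem_support_mem_supported_Iic hne
      have hmi : m ≤ i := Submodule.sub_mem _ hfi hgi hm
      have hne_i : m ≠ i := by
        rintro rfl
        simp [hgf] at hm
      exact ih m (hmi.lt_of_ne hne_i) _ (N.sub_mem hfN (hSN hgS)) hfgm
  refine hSN.antisymm fun f hf ↦ ?_
  rcases eq_or_ne f 0 with rfl | hne
  · exact S.zero_mem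
  obtain ⟨m, -, hfm⟩ := exists_mem_support_mem_supported_Iic hne
  exact mem_of_supported m f hf hfm

lemma linearIndependent_of_mem_supported_Iic [NoZeroDivisors R] {κ : Type*} {a : κ → ι}
    (ha : Function.Injective a) {v : κ → ι →₀ R}
    (hsupp : ∀ k, v k ∈ Finsupp.supported R R (Set.Iic (a k))) (hne : ∀ k, v k (a k) ≠ 0) :
    LinearIndependent R v := by
  rw [linearIndependent_iff]
  intro l hl
  by_contra hl0
  obtain ⟨m, hm, hmax⟩ := l.support.exists_max_image a (Finsupp.support_nonempty_iff.2 hl0)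
  have hvanish : ∀ k ∈ l.support, k ≠ m → l k * v k (a m) = 0 := by
    intro k hk hkm
    have hlt : a k < a m := (hmax k hk).lt_of_ne (ha.ne hkm)
    rw [(Finsupp.mem_supported' R _).1 (hsupp k) (a m) (by simpa using hlt), mul_zero]
  have hcoeff : l m * v m (a m) = 0 := by
    calc l m * v m (a m) = Finsupp.linearCombination R v l (a m) := by
          simp only [Finsupp.linearCombination_apply, Finsupp.sum, Finsupp.finsetSum_apply,
            Finsupp.smul_apply, smul_eq_mul, Finset.sum_eq_single_of_mem m hm hvanish]
      _ = 0 := by rw [hl, Finsupp.zero_apply]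
  exact mul_ne_zero (Finsupp.mem_support_iff.1 hm) (hne m) hcoeff

end LinearOrder

variable [NoZeroDivisors R] [IsPrincipalIdealRing R]

lemma free_submodule_finsupp (N : Submodule R (ι →₀ R)) : Module.Free R N := by
  classical
  let : LinearOrder ι := linearOrderOfSTO WellOrderingRel
  have : WellFoundedLT ι := inferInstanceAs (IsWellFounded ι WellOrderingRel)
  let gen (i : ι) : R := Submodule.IsPrincipal.generator (leadingCoeffIdeal N i)
  have hgen (i : ι) : gen i ∈ leadingCoeffIdeal N i := Submodule.IsPrincipal.generator_mem _
  choose e heN hesupp hegen using fun i ↦ mem_leadingCoeffIdeal.1 (hgen i)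
  let v (k : {i // gen i ≠ 0}) : ι →₀ R := e k
  have hli : LinearIndependent R v :=
    linearIndependent_of_mem_supported_Iic Subtype.val_injective (fun k ↦ hesupp k)
      fun k ↦ (hegen k).trans_ne k.2
  have hspan : Submodule.span R (Set.range v) = N := by
    refine eq_of_le_of_leadingCoeffIdeal_le (Submodule.span_le.2 ?_) fun i ↦ ?_
    · rintro _ ⟨k, rfl⟩
      exact heN k
    · rw [← Ideal.span_singleton_generator (leadingCoeffIdeal N i),
        Ideal.span_singleton_le_iff_mem]
      rcases eq_or_ne (gen i) 0 with hzero | hne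
      · change gen i ∈ _
        rw [hzero]
        exact Ideal.zero_mem _
      · exact mem_leadingCoeffIdeal.2
          ⟨e i, Submodule.subset_span ⟨⟨i, hne⟩, rfl⟩, hesupp i, hegen i⟩
  exact hspan ▸ Module.Free.of_basis (Module.Basis.span hli)

theorem free_of_injective {M N : Type*} [AddCommGroup M] [Module R M] [AddCommGroup N]
    [Module R N] [Module.Free R N] (f : M →ₗ[R] N) (hf : Function.Injective f) :
    Module.Free R M := by
  let φ := (Module.Free.chooseBasis R N).repr.toLinearMap ∘ₗ f
  have hφ : Function.Injective φ := (LinearEquiv.injective _).comp hf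
  have := free_submodule_finsupp (LinearMap.range φ)
  exact Module.Free.of_equiv (LinearEquiv.ofInjective φ hφ).symm

end SubmoduleOfFree

section CardinalFree

variable {A B : Type u} [AddCommGroup A] [AddCommGroup B] {κ : Cardinal.{u}}

/-- A `κ`-free abelian group: all its subgroups of cardinality less than `κ` are free. -/
def IsCardinalFree (κ : Cardinal.{u}) (A : Type u) [AddCommGroup A] : Prop :=
  ∀ S : AddSubgroup A, #S < κ → Module.Free ℤ S

lemma IsCardinalFree.of_injective (hA : IsCardinalFree κ A) (f : B →+ A)
    (hf : Function.Injective f) : IsCardinalFree κ B := by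
  intro S hS
  have := hA (S.map f) (mk_image_le.trans_lt hS)
  exact Module.Free.of_equiv (S.equivMapOfInjective f hf).symm.toIntLinearEquiv

lemma IsCardinalFree.isAddTorsionFree (hA : IsCardinalFree κ A) (hκ : ℵ₀ < κ) :
    IsAddTorsionFree A := by
  refine isAddTorsionFree_iff_not_isOfFinAddOrder.2 fun x hx hfin ↦ ?_
  have : Countable (AddSubgroup.zmultiples x) :=
    (Set.countable_range fun k : ℤ ↦ k • x).to_subtype
  have := hA (AddSubgroup.zmultiples x) (mk_le_aleph0.trans_lt hκ)
  have : IsAddTorsionFree (AddSubgroup.zmultiples x) := .of_isTorsionFree ℤ _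
  let y : AddSubgroup.zmultiples x := ⟨x, AddSubgroup.mem_zmultiples x⟩
  have hy : y ≠ 0 := fun h ↦ hx (congrArg Subtype.val h)
  exact isAddTorsionFree_iff_not_isOfFinAddOrder.1 this hy
    (AddSubmonoid.isOfFinAddOrder_coe.1 hfin)

end CardinalFree

section PureClosure

variable {A : Type u} [AddCommGroup A]

/-- The pure closure of a subgroup `S`: the elements with a nonzero multiple in `S`, that is, the
preimage of the torsion subgroup of `A ⧸ S`. It is the least pure subgroup above `S` when `A` is
torsion-free. -/
def pureClosure (S : AddSubgroup A) : AddSubgroup A :=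
  (AddCommGroup.torsion (A ⧸ S)).comap (QuotientAddGroup.mk' S)

variable {S : AddSubgroup A}

lemma mem_pureClosure {x : A} : x ∈ pureClosure S ↔ ∃ n : ℕ, n ≠ 0 ∧ n • x ∈ S := by
  simp [pureClosure, AddCommGroup.mem_torsion, isOfFinAddOrder_iff_nsmul_eq_zero,
    Nat.pos_iff_ne_zero, ← QuotientAddGroup.mk_nsmul]

lemma le_pureClosure : S ≤ pureClosure S :=
  fun x hx ↦ mem_pureClosure.2 ⟨1, one_ne_zero, by rwa [one_nsmul]⟩

lemma nsmulSaturated_pureClosure : (pureClosure S).NSMulSaturated := by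
  intro m x hx
  obtain ⟨n, hn, hnx⟩ := mem_pureClosure.1 hx
  refine or_iff_not_imp_left.2 fun hm ↦ mem_pureClosure.2 ⟨n * m, mul_ne_zero hn hm, ?_⟩
  rwa [mul_nsmul']

lemma mk_pureClosure_le [IsAddTorsionFree A] : #(pureClosure S) ≤ max #S ℵ₀ := by
  choose n hn hnS using fun x : pureClosure S ↦ mem_pureClosure.1 x.2
  let φ (x : pureClosure S) : S × ℕ := (⟨n x • x, hnS x⟩, n x)
  have hφ : Function.Injective φ := by
    intro x y hxy
    obtain ⟨hmul, hn_eq⟩ := Prod.ext_iff.1 hxy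
    refine Subtype.ext (nsmul_right_injective (hn x) ?_)
    calc n x • (x : A) = n y • (y : A) := congrArg Subtype.val hmul
      _ = n x • (y : A) := by rw [show n x = n y from hn_eq]
  calc #(pureClosure S) ≤ #(S × ℕ) := mk_le_of_injective hφ
    _ ≤ max #S ℵ₀ := by simpa using mul_le_max_of_aleph0_le_right le_rfl

end PureClosure

lemma exists_comp_eq_of_zmod {A B V : Type*} [AddCommGroup A] [AddCommGroup B] [AddCommGroup V]
    (p : ℕ) [Fact p.Prime] [Module (ZMod p) V] (f : B →+ A)
    (hf : ∀ b a, p • a = f b → ∃ b', p • b' = b) (h : B →+ V) :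
    ∃ g : A →+ V, g.comp f = h := by
  let hbar : ModN B p →ₗ[ZMod p] V :=
    ModN.liftEquiv'.symm ⟨h, fun _ ↦ ZModModule.char_nsmul_eq_zero p _⟩
  let fbar : ModN B p →ₗ[ZMod p] ModN A p :=
    ModN.liftEquiv'.symm ⟨(ModN.mkQ p).comp f, fun _ ↦ ZModModule.char_nsmul_eq_zero p _⟩
  have hker : LinearMap.ker fbar = ⊥ := by
    refine LinearMap.ker_eq_bot'.2 fun x hx ↦ ?_
    induction x using QuotientAddGroup.induction_on with
    | H b =>
      have hfb : (Submodule.Quotient.mk (f b) : ModN A p) = 0 := hx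
      obtain ⟨a, ha⟩ := (Submodule.Quotient.mk_eq_zero _).1 hfb
      obtain ⟨b', rfl⟩ := hf b a (by simpa using ha)
      exact (Submodule.Quotient.mk_eq_zero _).2 ⟨b', by simp⟩
  obtain ⟨r, hr⟩ := fbar.exists_leftInverse_of_injective hker
  refine ⟨(hbar ∘ₗ r).toAddMonoidHom.comp (ModN.mkQ p), ?_⟩
  ext b
  exact congrArg hbar (LinearMap.congr_fun hr (ModN.mkQ p b))

section Coseparable

variable {A : Type u} [AddCommGroup A]

lemma IsCoseparable.isCardinalFree (hA : IsCoseparable A) : IsCardinalFree ℵ₁ A := hA.1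

theorem IsCoseparable.of_nsmulSaturated (hA : IsCoseparable A) {B : AddSubgroup A}
    (hB : B.NSMulSaturated) : IsCoseparable B := by
  refine ⟨hA.isCardinalFree.of_injective B.subtype B.subtype_injective, fun p hp h ↦ ?_⟩
  have : Fact p.Prime := ⟨hp⟩
  obtain ⟨g, rfl⟩ := exists_comp_eq_of_zmod p B.subtype
    (fun b a hab ↦ ⟨⟨a, (hB (hab ▸ b.2)).resolve_left hp.ne_zero⟩, Subtype.ext hab⟩) h
  obtain ⟨k, rfl⟩ := hA.2 p hp g
  exact ⟨k.comp B.subtype, rfl⟩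

end Coseparable

theorem coseparable_lambda_free_general (lam : Cardinal.{u})
    (hmin : ∀ (A : Type u) [AddCommGroup A], #A < lam → IsCoseparable A → IsFreeAb A)
    (A : Type u) [AddCommGroup A] (hA : IsCoseparable A) : IsCardinalFree lam A := by
  intro S hS
  rcases lt_or_ge #S ℵ₁ with hcountable | huncountable
  · exact hA.isCardinalFree S hcountable
  have hinf : ℵ₀ ≤ #S := aleph0_lt_aleph_one.le.trans huncountable
  have : IsAddTorsionFree A := hA.isCardinalFree.isAddTorsionFree aleph0_lt_aleph_one
  have hcard : #(pureClosure S) < lam :=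
    (mk_pureClosure_le.trans (max_le le_rfl hinf)).trans_lt hS
  have : Module.Free ℤ (pureClosure S) :=
    hmin _ hcard (hA.of_nsmulSaturated nsmulSaturated_pureClosure)
  let incl : S →+ pureClosure S := AddSubgroup.inclusion le_pureClosure
  exact free_of_injective incl.toIntLinearMap
    (AddSubgroup.inclusion_injective le_pureClosure)

/-- If `λ` is the minimal cardinality of a non-free coseparable abelian group,
then every coseparable abelian group is `λ`-free. -/
theorem coseparable_lambda_free (lam : Cardinal.{u})
    (hex : ∃ (A₀ : Type u) (inst : AddCommGroup A₀),
      @IsCoseparable A₀ inst ∧ ¬ @IsFreeAb A₀ inst ∧ Cardinal.mk A₀ = lam)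
    (hmin : ∀ (A : Type u) [AddCommGroup A],
      Cardinal.mk A < lam → IsCoseparable A → IsFreeAb A)
    (A : Type u) [AddCommGroup A] (hA : IsCoseparable A)
    (S : AddSubgroup A) (hS : Cardinal.mk S < lam) :
    Module.Free ℤ S :=
  coseparable_lambda_free_general lam hmin A hA S hS
end

section
/- Let p be a prime, F a free abelian group, F̂ the p-adic completion of F, and A a p-pure subgroup of F̂. Let h : A → ℤ/pℤ be a group homomorphism and ĥ : A → ℤ a lifting of h. If x, y, a ∈ A and n ∈ ℕ are such that ĥ(x) = ĥ(y) and x − y − pⁿ·a ∈ pⁿ⁺¹·F̂, then h(a) = 0. (This is Proposition 3 of the paper: if x, y are written as p-adic sums x = Σ pᵐ xₘ, y = Σ pᵐ yₘ over a basis of F with coefficients in [0, p−1], ĥ(x) = ĥ(y), and n is least with xₙ ≠ yₙ, then h(xₙ) = h(yₙ); the element a plays the role of xₙ − yₙ.) -/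
/-!
The completion `F̂` has no `p`-torsion: if `p • w = 0`, a representative of `w` modulo `pⁿ⁺¹ • F`
is divisible by `pⁿ`, so `w` vanishes modulo `pⁿ • F` for every `n`. Purity can therefore be
iterated: `pᵐ • z ∈ A` forces `z ∈ A`. Hence the `z` with `x - y - pⁿ • a = pⁿ⁺¹ • z` lies in `A`,
and applying `ĥ` shows that `pⁿ⁺¹` divides `pⁿ * ĥ a`; cancelling `pⁿ` gives `p ∣ ĥ a`.
-/

section AdicCompletion

variable {R M : Type*} [CommRing R] [AddCommGroup M] [Module R M] {r : R}

theorem smul_mem_span_singleton_pow_succ_smul_top_iff (hr : IsSMulRegular M r) {n : ℕ} {m : M} :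
    r • m ∈ (Ideal.span {r} ^ (n + 1) • ⊤ : Submodule R M) ↔
      m ∈ (Ideal.span {r} ^ n • ⊤ : Submodule R M) := by
  simp only [Ideal.span_singleton_pow, Submodule.ideal_span_singleton_smul,
    Submodule.mem_smul_pointwise_iff_exists, Submodule.mem_top, true_and, pow_succ', mul_smul,
    hr.eq_iff, exists_eq_right]

theorem isSMulRegular_adicCompletion_span_singleton (hr : IsSMulRegular M r) :
    IsSMulRegular (AdicCompletion (Ideal.span {r}) M) r := by
  refine .of_right_eq_zero_of_smul fun w hw ↦ AdicCompletion.ext fun n ↦ ?_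
  obtain ⟨m, hm⟩ := Submodule.Quotient.mk_surjective _ (w.val (n + 1))
  have hrm : r • m ∈ (Ideal.span {r} ^ (n + 1) • ⊤ : Submodule R M) := by
    rw [← Submodule.Quotient.mk_eq_zero, Submodule.Quotient.mk_smul, hm,
      ← AdicCompletion.val_smul_apply, hw, AdicCompletion.val_zero_apply]
  calc w.val n = AdicCompletion.transitionMap _ M n.le_succ (w.val (n + 1)) :=
        (AdicCompletion.transitionMap_comp_eval_apply _ _ n.le_succ w).symm
    _ = Submodule.Quotient.mk m := by rw [← hm]; rfl
    _ = 0 := (Submodule.Quotient.mk_eq_zero _).2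
        ((smul_mem_span_singleton_pow_succ_smul_top_iff hr).1 hrm)

theorem isSMulRegular_adicCompletion_span_natCast {G : Type*} [AddCommGroup G] {p : ℕ}
    (hp : IsSMulRegular G (p : ℤ)) : IsSMulRegular (AdicCompletion (Ideal.span {(p : ℤ)}) G) p := by
  have hpInt : IsSMulRegular (AdicCompletion (Ideal.span {(p : ℤ)}) G) (p : ℤ) :=
    isSMulRegular_adicCompletion_span_singleton hp
  exact IsSMulRegular.natAbs_iff.2 hpInt

end AdicCompletion

section Pure

variable {K : Type*} [AddCommGroup K] {p : ℕ} {A : AddSubgroup K}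

/-- A subgroup `A` of an abelian group `K` is `p`-pure if an element of `A` is divisible by `p` in
`A` exactly when it is divisible by `p` in `K`. -/
def IsPPure (p : ℕ) (A : AddSubgroup K) : Prop :=
  ∀ a ∈ A, (∃ b ∈ A, p • b = a) ↔ ∃ x : K, p • x = a

theorem IsPPure.mem_of_nsmul_mem (hA : IsPPure p A) (hp : IsSMulRegular K p) {z : K}
    (hz : p • z ∈ A) : z ∈ A := by
  obtain ⟨b, hb, hbz⟩ := (hA _ hz).2 ⟨z, rfl⟩
  exact hp hbz ▸ hb

theorem IsPPure.mem_of_pow_nsmul_mem (hA : IsPPure p A) (hp : IsSMulRegular K p) {z : K} {m : ℕ}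
    (hz : p ^ m • z ∈ A) : z ∈ A := by
  induction m with
  | zero => simpa only [pow_zero, one_smul] using hz
  | succ m ih => exact ih (hA.mem_of_nsmul_mem hp (by rwa [smul_smul, ← pow_succ']))

end Pure

theorem natCast_dvd_map_of_sub_sub_nsmul_eq {G R : Type*} [AddGroup G] [Ring R] [IsCancelMulZero R]
    {p n : ℕ} (hp : (p : R) ≠ 0) (f : G →+ R) {x y a z : G}
    (hxy : (p : R) ^ (n + 1) ∣ f x - f y) (h : x - y - p ^ n • a = p ^ (n + 1) • z) :
    (p : R) ∣ f a := by
  have hf : f x - f y - p ^ n * f a = p ^ (n + 1) * f z := by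
    simpa only [map_sub, map_nsmul, nsmul_eq_mul, Nat.cast_pow] using congrArg f h
  have hdvd : (p : R) ^ n * p ∣ p ^ n * f a := by
    rw [← pow_succ, ← dvd_sub_right hxy, hf]
    exact dvd_mul_right _ _
  exact (mul_dvd_mul_iff_left (pow_ne_zero n hp)).1 hdvd

theorem prop_one_general {K : Type*} [AddCommGroup K] {p : ℕ} (hp : p ≠ 0)
    (hK : IsSMulRegular K p) {A : AddSubgroup K} (hA : IsPPure p A) {h : A →+ ZMod p}
    {hh : A →+ ℤ} (hlift : (Int.castAddHom (ZMod p)).comp hh = h) {x y a : A} {n : ℕ}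
    (hxy : hh x ≡ hh y [ZMOD p ^ (n + 1)])
    (hdiv : ∃ z : K, (x : K) - y - p ^ n • (a : K) = p ^ (n + 1) • z) : h a = 0 := by
  obtain ⟨z, hz⟩ := hdiv
  have hpz : p ^ (n + 1) • z ∈ A := hz ▸ A.sub_mem (A.sub_mem x.2 y.2) (A.nsmul_mem a.2 _)
  have hzA : z ∈ A := hA.mem_of_pow_nsmul_mem hK hpz
  have hdvd : (p : ℤ) ∣ hh a :=
    natCast_dvd_map_of_sub_sub_nsmul_eq (z := ⟨z, hzA⟩) (Int.natCast_ne_zero.2 hp) hh hxy.symm.dvd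
      (Subtype.ext hz)
  rw [← hlift]
  exact (ZMod.intCast_zmod_eq_zero_iff_dvd _ p).2 hdvd

/-- Proposition 3 of the paper: if `A` is a `p`-pure subgroup of the `p`-adic completion
of a free abelian group `F`, `ĥ` is a lifting of `h : A → ℤ/pℤ`, `ĥ(x) = ĥ(y)` and
`x - y - pⁿ·a ∈ pⁿ⁺¹·F̂`, then `h(a) = 0`. -/
theorem prop_one (p : ℕ) (hp : p.Prime)
    (F : Type*) [AddCommGroup F] [Module.Free ℤ F]
    (A : AddSubgroup (AdicCompletion (Ideal.span {(p : ℤ)}) F))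
    (hpure : ∀ a ∈ A, (∃ b ∈ A, p • b = a) ↔
      (∃ x : AdicCompletion (Ideal.span {(p : ℤ)}) F, p • x = a))
    (h : A →+ ZMod p) (hh : A →+ ℤ)
    (hlift : (Int.castAddHom (ZMod p)).comp hh = h)
    (x y a : A) (n : ℕ)
    (hxy : hh x = hh y)
    (hdiv : ∃ z : AdicCompletion (Ideal.span {(p : ℤ)}) F,
      (x : AdicCompletion (Ideal.span {(p : ℤ)}) F) - y - p ^ n • (a : AdicCompletion (Ideal.span {(p : ℤ)}) F) = p ^ (n + 1) • z) :
    h a = 0 :=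
  prop_one_general hp.ne_zero
    (isSMulRegular_adicCompletion_span_natCast (.of_ne_zero (mod_cast hp.ne_zero)))
    hpure hlift (by rw [hxy]) hdiv
end

section
/- Let A be an abelian group, p a prime, and (aₙ)ₙ∈ℕ a sequence of elements of A that is ℤ-linearly independent (so the subgroup S generated by {aₙ : n ∈ ℕ} is free with basis the aₙ) and such that S is p-pure in A. Suppose that for every n, every group homomorphism h : A → ℤ/pℤ with h(aₙ) ≠ 0 has no lifting to ℤ. Then there is a family (h_s) of group homomorphisms A → ℤ/pℤ indexed by s : ℕ → {0,1} such that for all s ≠ t, the homomorphism h_s − h_t has no lifting to ℤ; in particular h_s and h_t represent distinct elements of Ext_p(A, ℤ), so Ext_p(A, ℤ) has cardinality at least 2^ℵ₀. -/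
/-!
Purity says exactly that the independence of `(aₙ)` survives reduction mod `p`: the images of the
`aₙ` are linearly independent in the `𝔽_p`-vector space `A / pA`. A linear functional on `A / pA`
can therefore be given arbitrary values on them, so every `s` is realised by a homomorphism `h_s`
with `h_s (aₙ) = s n`. If `s n ≠ t n`, then `h_s - h_t` does not vanish at `aₙ`,
so by assumption it has no lifting to `ℤ`.
-/

open Finsupp

section

variable {A ι : Type*} [AddCommGroup A] {n p : ℕ} {a : ι → A}

/-- `n`-purity of a subgroup `H` of `A`, that is `nH = H ∩ nA`; for `n` prime this is the notion of
a `p`-pure subgroup. -/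
def IsPureAt (n : ℕ) (H : AddSubgroup A) : Prop :=
  ∀ x ∈ H, (∃ b ∈ H, n • b = x) ↔ ∃ y : A, n • y = x

theorem mkQ_eq_zero_iff {x : A} : ModN.mkQ n x = 0 ↔ ∃ y : A, n • y = x := by
  refine (Submodule.Quotient.mk_eq_zero _).trans ?_
  simp only [LinearMap.mem_range, LinearMap.lsmul_apply, natCast_zsmul]

theorem mkQ_linearCombination (a : ι → A) (c : ι →₀ ℤ) :
    ModN.mkQ n (linearCombination ℤ a c) =
      linearCombination (ZMod n) (ModN.mkQ n ∘ a) (c.mapRange Int.cast Int.cast_zero) := by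
  induction c using Finsupp.induction_linear with
  | zero => simp
  | add c d hc hd => simp [mapRange_add, hc, hd]
  | single i k => simp [Int.cast_smul_eq_zsmul]

theorem mem_closure_range_iff_exists_linearCombination {x : A} :
    x ∈ AddSubgroup.closure (Set.range a) ↔ ∃ c : ι →₀ ℤ, linearCombination ℤ a c = x := by
  rw [← Submodule.span_int_eq_addSubgroupClosure, Submodule.mem_toAddSubgroup,
    mem_span_range_iff_exists_finsupp]
  rfl

theorem IsPureAt.dvd_coeff (hpure : IsPureAt n (AddSubgroup.closure (Set.range a)))
    (hli : LinearIndependent ℤ a) {c : ι →₀ ℤ} (hc : ∃ y : A, n • y = linearCombination ℤ a c)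
    (i : ι) : (n : ℤ) ∣ c i := by
  obtain ⟨b, hb, hbc⟩ :=
    (hpure _ (mem_closure_range_iff_exists_linearCombination.2 ⟨c, rfl⟩)).2 hc
  obtain ⟨d, rfl⟩ := mem_closure_range_iff_exists_linearCombination.1 hb
  have hcd : n • d = c := hli (by rw [map_nsmul, hbc])
  exact ⟨d i, by simp [← hcd]⟩

theorem IsPureAt.linearIndependent_mkQ (hpure : IsPureAt n (AddSubgroup.closure (Set.range a)))
    (hli : LinearIndependent ℤ a) : LinearIndependent (ZMod n) (ModN.mkQ n ∘ a) := by
  rw [linearIndependent_iff]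
  intro g hg
  obtain ⟨c, rfl⟩ := mapRange_surjective Int.cast Int.cast_zero ZMod.intCast_surjective g
  rw [← mkQ_linearCombination, mkQ_eq_zero_iff] at hg
  ext i
  exact (ZMod.intCast_zmod_eq_zero_iff_dvd _ _).2 (hpure.dvd_coeff hli hg i)

theorem exists_linearMap_apply_eq {K V W : Type*} [DivisionRing K] [AddCommGroup V] [Module K V]
    [AddCommGroup W] [Module K W] {v : ι → V} (hv : LinearIndependent K v) (w : ι → W) :
    ∃ f : V →ₗ[K] W, ∀ i, f (v i) = w i := by
  let b := Module.Basis.span hv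
  obtain ⟨f, hf⟩ := (b.constr ℕ w).exists_extend
  refine ⟨f, fun i => ?_⟩
  calc f (v i) = (f ∘ₗ (Submodule.span K (Set.range v)).subtype) (b i) := by
        simp [b, Module.Basis.span_apply]
    _ = w i := by rw [hf, b.constr_basis]

theorem exists_addMonoidHom_apply_eq [Fact p.Prime]
    (hli : LinearIndependent (ZMod p) (ModN.mkQ p ∘ a)) (s : ι → ZMod p) :
    ∃ h : A →+ ZMod p, ∀ i, h (a i) = s i := by
  obtain ⟨f, hf⟩ := exists_linearMap_apply_eq hli s
  exact ⟨f.toAddMonoidHom.comp (ModN.mkQ p), hf⟩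

theorem ext_p_large_general [Fact p.Prime]
    (hli : LinearIndependent (ZMod p) (ModN.mkQ p ∘ a))
    (hbad : ∀ (i : ι) (h : A →+ ZMod p), h (a i) ≠ 0 →
      ¬ ∃ g : A →+ ℤ, (Int.castAddHom (ZMod p)).comp g = h) :
    ∃ h : (ι → ZMod p) → (A →+ ZMod p),
      ∀ s t : ι → ZMod p, s ≠ t →
        ¬ ∃ g : A →+ ℤ, (Int.castAddHom (ZMod p)).comp g = h s - h t := by
  choose h hval using exists_addMonoidHom_apply_eq hli
  refine ⟨h, fun s t hst => ?_⟩
  obtain ⟨i, hi⟩ := Function.ne_iff.1 hst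
  apply hbad i
  rwa [AddMonoidHom.sub_apply, hval, hval, sub_ne_zero]

end

/-- If `(aₙ)` is a `ℤ`-linearly independent sequence in an abelian group `A` generating a
`p`-pure subgroup, and every homomorphism `A → ℤ/pℤ` which is nonzero on some `aₙ` has no
lifting to `ℤ`, then there is a family of `2^ℵ₀` homomorphisms `A → ℤ/pℤ`, indexed by
`s : ℕ → Bool`, any two of which differ by a homomorphism with no lifting to `ℤ`
(hence represent distinct elements of `Ext_p(A, ℤ)`). -/
theorem ext_p_large (A : Type*) [AddCommGroup A] (p : ℕ) (hp : p.Prime)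
    (a : ℕ → A) (hli : LinearIndependent ℤ a)
    (hpure : ∀ x ∈ AddSubgroup.closure (Set.range a),
      (∃ b ∈ AddSubgroup.closure (Set.range a), p • b = x) ↔ (∃ y : A, p • y = x))
    (hbad : ∀ (n : ℕ) (h : A →+ ZMod p), h (a n) ≠ 0 →
      ¬ ∃ g : A →+ ℤ, (Int.castAddHom (ZMod p)).comp g = h) :
    ∃ h : (ℕ → Bool) → (A →+ ZMod p),
      ∀ s t : ℕ → Bool, s ≠ t →
        ¬ ∃ g : A →+ ℤ, (Int.castAddHom (ZMod p)).comp g = h s - h t := by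
  have : Fact p.Prime := ⟨hp⟩
  obtain ⟨h, hh⟩ := ext_p_large_general (IsPureAt.linearIndependent_mkQ hpure hli) hbad
  have cond_injective : Function.Injective fun b : Bool => bif b then (1 : ZMod p) else 0 :=
    Bool.injective_iff.2 zero_ne_one
  exact ⟨fun s => h fun n => bif s n then 1 else 0,
    fun _ _ hst => hh _ _ (cond_injective.comp_left.ne hst)⟩
end

section
/- Let A be an abelian group, B a subgroup of A, p a prime, and π : A → A/B the quotient map. Suppose k : A/B → ℤ/pℤ is a group homomorphism that has no lifting to ℤ. Let f : B → ℤ be a group homomorphism and let g₀, g₁ : A → ℤ/pℤ be group homomorphisms with g₁ − g₀ = k ∘ π. Then at most one of g₀, g₁ admits a lifting extending f: there do not exist group homomorphisms f₀, f₁ : A → ℤ such that for each i ∈ {0,1}, fᵢ restricted to B equals f and the reduction of fᵢ modulo p equals gᵢ. -/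
/-!
Two homomorphisms that agree on `B` differ by one that vanishes on `B`, hence factors through
`A ⧸ B`. For two liftings of `g₀` and `g₁` extending the same `f`, the factored difference reduces
to `k`, because `π` is surjective and so can be cancelled from `g₁ - g₀ = k ∘ π`.
-/

section Liftings

variable {A M N : Type*} [AddGroup A] {B : AddSubgroup A}

theorem le_ker_sub_iff_comp_subtype_eq [AddCommGroup M] {f₀ f₁ : A →+ M} :
    B ≤ (f₁ - f₀).ker ↔ f₁.comp B.subtype = f₀.comp B.subtype := by
  simp only [SetLike.le_def, AddMonoidHom.mem_ker, AddMonoidHom.sub_apply, sub_eq_zero,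
    DFunLike.ext_iff, AddMonoidHom.comp_apply, AddSubgroup.subtype_apply, Subtype.forall]

theorem exists_comp_eq_of_comp_eq_comp_mk' [B.Normal] [AddMonoid M] [AddMonoid N]
    {r : M →+ N} {h : A →+ M} {k : A ⧸ B →+ N} (hB : B ≤ h.ker)
    (hk : r.comp h = k.comp (QuotientAddGroup.mk' B)) :
    ∃ K : A ⧸ B →+ M, r.comp K = k :=
  ⟨QuotientAddGroup.lift B h hB, QuotientAddGroup.addMonoidHom_ext B <| by
    rw [AddMonoidHom.comp_assoc, QuotientAddGroup.lift_comp_mk', hk]⟩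

theorem at_most_one_lifting_general [B.Normal] [AddCommGroup M] [AddCommGroup N]
    {r : M →+ N} {k : A ⧸ B →+ N} (hk : ¬ ∃ K : A ⧸ B →+ M, r.comp K = k)
    {f : B →+ M} {g₀ g₁ : A →+ N} (hg : g₁ - g₀ = k.comp (QuotientAddGroup.mk' B)) :
    ¬ ∃ f₀ f₁ : A →+ M,
      f₀.comp B.subtype = f ∧ r.comp f₀ = g₀ ∧ f₁.comp B.subtype = f ∧ r.comp f₁ = g₁ := by
  rintro ⟨f₀, f₁, hf₀, hg₀, hf₁, hg₁⟩
  have vanishes_on_B : B ≤ (f₁ - f₀).ker := le_ker_sub_iff_comp_subtype_eq.2 (hf₁.trans hf₀.symm)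
  have reduces_to_k : r.comp (f₁ - f₀) = k.comp (QuotientAddGroup.mk' B) := by
    rw [AddMonoidHom.comp_sub, hg₀, hg₁, hg]
  exact hk (exists_comp_eq_of_comp_eq_comp_mk' vanishes_on_B reduces_to_k)

end Liftings

/-- If `k : A/B → ℤ/pℤ` has no lifting to `ℤ` and `g₁ - g₀ = k ∘ π`, then at most one
of `g₀, g₁` admits a lifting to `ℤ` extending a given `f : B → ℤ`. -/
theorem at_most_one_lifting (A : Type*) [AddCommGroup A] (B : AddSubgroup A)
    (p : ℕ) (hp : p.Prime)
    (k : A ⧸ B →+ ZMod p)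
    (hk : ¬ ∃ K : A ⧸ B →+ ℤ, (Int.castAddHom (ZMod p)).comp K = k)
    (f : B →+ ℤ) (g₀ g₁ : A →+ ZMod p)
    (hg : g₁ - g₀ = k.comp (QuotientAddGroup.mk' B)) :
    ¬ ∃ f₀ f₁ : A →+ ℤ,
      f₀.comp B.subtype = f ∧ (Int.castAddHom (ZMod p)).comp f₀ = g₀ ∧
      f₁.comp B.subtype = f ∧ (Int.castAddHom (ZMod p)).comp f₁ = g₁ :=
  at_most_one_lifting_general hk hg
end

section
/- Let p be a prime, F a free abelian group, F̂ the p-adic completion of F (with F identified with its image under the canonical embedding F → F̂), and A a p-pure subgroup of F̂ containing F. Then the restriction map from Hom(A, ℤ/pℤ) to Hom(F, ℤ/pℤ) is a bijection: every group homomorphism F → ℤ/pℤ extends uniquely to a group homomorphism A → ℤ/pℤ. -/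
/-!
Homomorphisms into a module `N` killed by `I` only see a module modulo `I`. Hence every `M → N`
extends to the completion `M̂` through the projection `M̂ → M ⧸ I M`. For finitely generated `I`
this projection has kernel `I M̂`, so `M̂ = M + I M̂`; if `A` is pure and contains `M`, the modular
law cuts this down to `A = M + I A`, and a homomorphism `A → N` is determined by its values on `M`.
-/

universe u

section

variable {R M N P : Type*} [CommRing R] [AddCommGroup M] [Module R M] [AddCommGroup N] [Module R N]
  [AddCommGroup P] [Module R P] {I : Ideal R}

/-- Purity of a submodule `A` of `P` relative to a single ideal `I`, i.e. `A ∩ I P = I A`; for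
`I = (p)` in `ℤ` this is `p`-purity. Encoded as the nontrivial inclusion. -/
def IsIdealPure (I : Ideal R) (A : Submodule R P) : Prop :=
  A ⊓ I • ⊤ ≤ I • A

theorem isIdealPure_span_singleton_iff {r : R} {A : Submodule R P} :
    IsIdealPure (Ideal.span {r}) A ↔ ∀ a ∈ A, (∃ x, r • x = a) → ∃ b ∈ A, r • b = a := by
  simp only [IsIdealPure, SetLike.le_def, Submodule.mem_inf, Submodule.ideal_span_singleton_smul,
    Submodule.mem_smul_pointwise_iff_exists, Submodule.mem_top, true_and, and_imp]

theorem smul_top_le_ker_of_isTorsionBySet (hN : Module.IsTorsionBySet R N I) (g : M →ₗ[R] N) :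
    I • ⊤ ≤ g.ker :=
  Submodule.smul_le.2 fun r hr x _ ↦ by
    rw [LinearMap.mem_ker, map_smul]
    exact hN (a := ⟨r, hr⟩)

theorem comp_injective_of_range_sup_smul_top (hN : Module.IsTorsionBySet R N I) {f : M →ₗ[R] P}
    (hf : f.range ⊔ I • ⊤ = ⊤) : Function.Injective fun g : P →ₗ[R] N ↦ g ∘ₗ f := by
  intro g₁ g₂ hg
  have hrange : f.range ≤ (g₁ - g₂).ker := by
    rw [LinearMap.range_le_ker_iff, LinearMap.sub_comp, sub_eq_zero]
    exact hg
  rw [← sub_eq_zero, ← LinearMap.ker_eq_top, eq_top_iff, ← hf]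
  exact sup_le hrange (smul_top_le_ker_of_isTorsionBySet hN _)

theorem IsIdealPure.range_codRestrict_sup_smul_top {A : Submodule R P} (hA : IsIdealPure I A)
    {f : M →ₗ[R] P} (hf : f.range ⊔ I • ⊤ = ⊤) (hfA : ∀ x, f x ∈ A) :
    (f.codRestrict A hfA).range ⊔ I • ⊤ = ⊤ := by
  have hrange : f.range ≤ A := by
    rintro _ ⟨x, rfl⟩
    exact hfA x
  apply Submodule.map_injective_of_injective A.injective_subtype
  rw [Submodule.map_sup, Submodule.map_smul'', Submodule.map_subtype_top, ← LinearMap.range_comp,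
    LinearMap.subtype_comp_codRestrict]
  refine le_antisymm (sup_le hrange Submodule.smul_le_right) ?_
  calc A = (f.range ⊔ I • ⊤) ⊓ A := by rw [hf, top_inf_eq]
    _ = f.range ⊔ A ⊓ I • ⊤ := by rw [sup_inf_assoc_of_le _ hrange, inf_comm]
    _ ≤ f.range ⊔ I • A := sup_le_sup_left hA _

theorem range_adicCompletion_of_sup_smul_top (hI : I.FG) :
    (AdicCompletion.of I M).range ⊔ I • ⊤ = ⊤ := by
  have hker : I • ⊤ = (AdicCompletion.eval I M 1).ker := by
    simpa only [pow_one] using AdicCompletion.pow_smul_top_eq_ker_eval (n := 1) hI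
  rw [hker, ← Submodule.comap_map_eq, ← LinearMap.range_comp, AdicCompletion.eval_comp_of,
    Submodule.range_mkQ, Submodule.comap_top]

theorem exists_comp_adicCompletion_of_eq (hN : Module.IsTorsionBySet R N I) (f : M →ₗ[R] N) :
    ∃ g : AdicCompletion I M →ₗ[R] N, g ∘ₗ AdicCompletion.of I M = f := by
  have hf : I ^ 1 • ⊤ ≤ f.ker := by
    simpa only [pow_one] using smul_top_le_ker_of_isTorsionBySet hN f
  refine ⟨(I ^ 1 • ⊤ : Submodule R M).liftQ f hf ∘ₗ AdicCompletion.eval I M 1, ?_⟩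
  rw [LinearMap.comp_assoc, AdicCompletion.eval_comp_of, Submodule.liftQ_mkQ]

theorem restriction_bijective_general (hI : I.FG) (hN : Module.IsTorsionBySet R N I)
    {A : Submodule R (AdicCompletion I M)} (hMA : ∀ x, AdicCompletion.of I M x ∈ A)
    (hA : IsIdealPure I A) :
    Function.Bijective fun g : A →ₗ[R] N ↦ g ∘ₗ (AdicCompletion.of I M).codRestrict A hMA := by
  have hdense := hA.range_codRestrict_sup_smul_top (range_adicCompletion_of_sup_smul_top hI) hMA
  refine ⟨comp_injective_of_range_sup_smul_top hN hdense, fun f ↦ ?_⟩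
  obtain ⟨g, rfl⟩ := exists_comp_adicCompletion_of_eq hN f
  exact ⟨g ∘ₗ A.subtype, rfl⟩

end

/-- If `A` is a `p`-pure subgroup of the `p`-adic completion of a free abelian group `F`
containing (the canonical image of) `F`, then restriction along `F → A` is a bijection
from `Hom(A, ℤ/pℤ)` to `Hom(F, ℤ/pℤ)`: every homomorphism `F → ℤ/pℤ` extends uniquely
to a homomorphism `A → ℤ/pℤ`. -/
theorem restriction_bijective (p : ℕ) (hp : p.Prime)
    (F : Type u) [AddCommGroup F] [Module.Free ℤ F]
    (A : AddSubgroup (AdicCompletion (Ideal.span {(p : ℤ)}) F))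
    (hFA : ∀ x : F, (AdicCompletion.of (Ideal.span {(p : ℤ)}) F) x ∈ A)
    (hpure : ∀ a ∈ A, (∃ b ∈ A, p • b = a) ↔
      (∃ x : AdicCompletion (Ideal.span {(p : ℤ)}) F, p • x = a)) :
    Function.Bijective (fun g : A →+ ZMod p =>
      g.comp (((AdicCompletion.of (Ideal.span {(p : ℤ)}) F).toAddMonoidHom).codRestrict A hFA)) := by
  have hN : Module.IsTorsionBySet ℤ (ZMod p) (Ideal.span {(p : ℤ)}) :=
    (Module.isTorsionBySet_span_singleton_iff _).2 fun y ↦ by simp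
  have hA : IsIdealPure (Ideal.span {(p : ℤ)}) A.toIntSubmodule :=
    isIdealPure_span_singleton_iff.2 fun a ha ↦ by
      simpa only [natCast_zsmul] using! (hpure a ha).2
  have h := restriction_bijective_general (Submodule.fg_span_singleton _) hN hFA hA
  exact (addMonoidHomLequivInt ℤ).symm.bijective.comp (h.comp (addMonoidHomLequivInt ℤ).bijective)
end
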